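/- Let α, β, r be real numbers with r > 0, sin(β·π/2) ≠ 0, and sin((α + β)·π/2) ≠ 0. If ((r : ℂ) * Complex.I)^((α + β : ℝ) : ℂ) + 12 * ((r : ℂ) * Complex.I)^(α : ℂ) + 34 = 0, then (−12 * Real.sin (α * π / 2) / Real.sin ((α + β) * π / 2))^α = (−(17/6) * Real.sin ((α + β) * π / 2) / Real.sin (β * π / 2))^β (real powers), and both bases appearing in this equation are positive (being equal to r^β and r^α respectively). -/

import Mathlib

open Real

lemma rI_cpow (r x : ℝ) (hr : 0 < r) : ((r : ℂ) * Complex.I) ^ (x : ℂ)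
    = ((r ^ x * Real.cos (x * π / 2) : ℝ) : ℂ)
      + ((r ^ x * Real.sin (x * π / 2) : ℝ) : ℂ) * Complex.I := by
  have h0 : ((r : ℂ) * Complex.I) ≠ 0 :=
    mul_ne_zero (by exact_mod_cast hr.ne') Complex.I_ne_zero
  have h1 : Complex.log ((r : ℂ) * Complex.I) * (x : ℂ)
      = ((Real.log r * x : ℝ) : ℂ) + ((x * π / 2 : ℝ) : ℂ) * Complex.I := by
    rw [Complex.log_ofReal_mul hr Complex.I_ne_zero, Complex.log_I]
    push_cast
    ring
  rw [Complex.cpow_def_of_ne_zero h0, h1, Complex.exp_add, Complex.exp_mul_I,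
    Real.rpow_def_of_pos hr]
  push_cast
  ring

/-- Eq. (37) in Example 3 of the paper: the boundary equation of the stable parameter
region of the system with characteristic equation s^{α+β} + 12 s^α + 34 = 0, with both
bases positive (equal to r^β and r^α respectively). -/
theorem example3_boundary (α β r : ℝ) (hr : 0 < r)
    (hβ : Real.sin (β * π / 2) ≠ 0) (hαβ : Real.sin ((α + β) * π / 2) ≠ 0)
    (hroot : ((r : ℂ) * Complex.I) ^ (((α + β : ℝ)) : ℂ)
      + 12 * ((r : ℂ) * Complex.I) ^ (α : ℂ) + 34 = 0) :
    (-12 * Real.sin (α * π / 2) / Real.sin ((α + β) * π / 2)) ^ α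
      = (-(17/6) * Real.sin ((α + β) * π / 2) / Real.sin (β * π / 2)) ^ β ∧
    -12 * Real.sin (α * π / 2) / Real.sin ((α + β) * π / 2) = r ^ β ∧
    -(17/6) * Real.sin ((α + β) * π / 2) / Real.sin (β * π / 2) = r ^ α ∧
    0 < -12 * Real.sin (α * π / 2) / Real.sin ((α + β) * π / 2) ∧
    0 < -(17/6) * Real.sin ((α + β) * π / 2) / Real.sin (β * π / 2) := by
  rw [rI_cpow r _ hr, rI_cpow r _ hr] at hroot
  have hre := congrArg Complex.re hroot
  have him := congrArg Complex.im hroot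
  simp only [Complex.add_re, Complex.add_im, Complex.mul_re, Complex.mul_im, Complex.ofReal_re,
    Complex.ofReal_im, Complex.I_re, Complex.I_im, Complex.zero_re, Complex.zero_im,
    Complex.re_ofNat, Complex.im_ofNat] at hre him
  have hA := Real.rpow_pos_of_pos hr α
  have hB := Real.rpow_pos_of_pos hr β
  rw [Real.rpow_add hr] at hre him
  have hs : Real.sin (β * π / 2) = Real.sin ((α + β) * π / 2) * Real.cos (α * π / 2)
      - Real.cos ((α + β) * π / 2) * Real.sin (α * π / 2) := by
    rw [← Real.sin_sub]
    congr 1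
    ring
  have e1 : -12 * Real.sin (α * π / 2) / Real.sin ((α + β) * π / 2) = r ^ β := by
    rw [div_eq_iff hαβ]
    apply mul_left_cancel₀ hA.ne'
    linear_combination -him
  have e2 : -(17/6) * Real.sin ((α + β) * π / 2) / Real.sin (β * π / 2) = r ^ α := by
    rw [div_eq_iff hβ, hs]
    linear_combination (-Real.sin ((α + β) * π / 2) * hre + Real.cos ((α + β) * π / 2) * him) / 12
  refine ⟨?_, e1, e2, e1 ▸ hB, e2 ▸ hA⟩
  rw [e1, e2, ← Real.rpow_mul hr.le, ← Real.rpow_mul hr.le, mul_comm]
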